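/- Let κ ∈ ℂ, and define ρ = (λ − μ + ν + 1)/2 and a = (a₁,a₂,a₃) = ((λ−μ+ν+1)/(2κ), (λ+μ+ν+3)/(2κ), (1+λ)/κ). Then the pair of functions f₀(z) = z^{λ/(2κ)}(1−z)^{ν/(2κ)} ₂F₁(a₁,a₂;a₃|z) and f₁(z) = −(a₁/a₃)·z^{λ/(2κ)}(1−z)^{ν/(2κ)} ₂F₁(a₁+1,a₂;a₃+1|z) satisfies the Knizhnik–Zamolodchikov system κ f₀' = f₀·(λ/(2z) + (ν−2ρ)/(2(z−1))) + f₁·(ν−ρ+1)/(z−1) and κ f₁' = f₀·(ρ/(z−1) − ρ/z) + f₁·((−λ−2)/(2z) − (ν−2(ρ−1))/(2(z−1))) on 0 < |z| < 1. -/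

import Mathlib

/-- The Gauss hypergeometric series `₂F₁(a,b;c|z) = Σ_{n≥0} (a)ₙ(b)ₙ/((c)ₙ n!) zⁿ`. -/
noncomputable def hyp2F1 (a b c z : ℂ) : ℂ :=
  ∑' n : ℕ,
    ((ascPochhammer ℂ n).eval a * (ascPochhammer ℂ n).eval b /
      ((ascPochhammer ℂ n).eval c * (n.factorial : ℂ))) * z ^ n

/-!
Write `F = ₂F₁ a b c`, `G = ₂F₁ (a + 1) b (c + 1)` and `H = ₂F₁ (a + 1) b c`. Comparing coefficients
gives `z F' = a (H - F)`, `z G' = c (H - G)` and Gauss' contiguous relation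
`c (1 - z) H = c F + (b - c) z G`. Eliminating `H` leaves a first-order system for `(F, -(a / c) G)`
with poles at `0` and `1`; multiplying by `z ^ α * (1 - z) ^ β` only shifts its diagonal residues,
and the KZ system is the case `α = λ / (2κ)`, `β = ν / (2κ)`.
-/

section Series

theorem ascPochhammer_eval_mul_add {R : Type*} [CommSemiring R] (a : R) (n : ℕ) :
    (ascPochhammer R n).eval a * (a + n) = a * (ascPochhammer R n).eval (a + 1) := by
  rw [← ascPochhammer_succ_eval, ascPochhammer_succ_left]
  simp

theorem ascPochhammer_eval_ne_zero {R : Type*} [CommRing R] [IsDomain R] {c : R}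
    (hc : ∀ m : ℕ, c ≠ -m) (n : ℕ) : (ascPochhammer R n).eval c ≠ 0 := by
  rw [Ne, ascPochhammer_eval_eq_zero_iff]
  rintro ⟨m, -, hm⟩
  exact hc m (by rw [hm, neg_neg])

theorem add_one_ne_neg_natCast {R : Type*} [Ring R] {c : R} (hc : ∀ m : ℕ, c ≠ -m) (m : ℕ) :
    c + 1 ≠ -m := fun h ↦ hc (m + 1) (by rw [eq_sub_of_add_eq h]; push_cast; abel)

theorem mem_eball_zero_one_of_norm_lt_one {E : Type*} [SeminormedAddCommGroup E] {x : E}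
    (hx : ‖x‖ < 1) : x ∈ Metric.eball 0 1 := by
  simpa [← ofReal_norm] using hx

theorem hasSum_nsmul_of_hasFPowerSeriesOnBall {𝕜 E F : Type*} [NontriviallyNormedField 𝕜]
    [NormedAddCommGroup E] [NormedSpace 𝕜 E] [NormedAddCommGroup F] [NormedSpace 𝕜 F]
    [CompleteSpace F] {f : E → F} {p : FormalMultilinearSeries 𝕜 E F} {x y : E}
    {r : ENNReal} (hf : HasFPowerSeriesOnBall f p x r) (hy : y ∈ Metric.eball 0 r) :
    HasSum (fun n ↦ n • p n fun _ ↦ y) (fderiv 𝕜 f (x + y) y) := by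
  have hsum := (hf.fderiv.hasSum hy).mapL (ContinuousLinearMap.apply 𝕜 F y)
  rw [← hasSum_nat_add_iff' 1]
  simpa [FormalMultilinearSeries.derivSeries_apply_diag] using hsum

end Series

section Coefficient

variable {𝕂 : Type*} [Field 𝕂] (a b : 𝕂) {c : 𝕂} (n : ℕ)

theorem mul_ordinaryHypergeometricCoefficient_add_one_left (c : 𝕂) :
    a * ordinaryHypergeometricCoefficient (a + 1) b c n =
      (a + n) * ordinaryHypergeometricCoefficient a b c n := by
  linear_combination -((n.factorial : 𝕂)⁻¹ * (ascPochhammer 𝕂 n).eval b *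
    ((ascPochhammer 𝕂 n).eval c)⁻¹) * ascPochhammer_eval_mul_add a n

theorem mul_ordinaryHypergeometricCoefficient_add_one_right (hc : ∀ m : ℕ, c ≠ -m) :
    c * ordinaryHypergeometricCoefficient a b c n =
      (c + n) * ordinaryHypergeometricCoefficient a b (c + 1) n := by
  have hcn := ascPochhammer_eval_ne_zero hc n
  have hcn' := ascPochhammer_eval_ne_zero (add_one_ne_neg_natCast hc) n
  have hshift : c * ((ascPochhammer 𝕂 n).eval c)⁻¹ =
      (c + n) * ((ascPochhammer 𝕂 n).eval (c + 1))⁻¹ := by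
    field_simp
    linear_combination -ascPochhammer_eval_mul_add c n
  linear_combination (n.factorial : 𝕂)⁻¹ * (ascPochhammer 𝕂 n).eval a *
    (ascPochhammer 𝕂 n).eval b * hshift

theorem mul_ordinaryHypergeometricCoefficient_succ_sub [CharZero 𝕂] (hc : ∀ m : ℕ, c ≠ -m) :
    c * (ordinaryHypergeometricCoefficient (a + 1) b c (n + 1) -
        ordinaryHypergeometricCoefficient a b c (n + 1)) =
      (b + n) * ordinaryHypergeometricCoefficient (a + 1) b (c + 1) n := by
  have hcn' := ascPochhammer_eval_ne_zero (add_one_ne_neg_natCast hc) n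
  have hc0 : c ≠ 0 := by simpa using hc 0
  have hn : (n : 𝕂) + 1 ≠ 0 := n.cast_add_one_ne_zero
  have hfact : (n.factorial : 𝕂) ≠ 0 := Nat.cast_ne_zero.2 n.factorial_ne_zero
  have hsucc (x : 𝕂) :
      (ascPochhammer 𝕂 (n + 1)).eval x = x * (ascPochhammer 𝕂 n).eval (x + 1) := by
    rw [ascPochhammer_succ_eval, ascPochhammer_eval_mul_add]
  simp only [ordinaryHypergeometricCoefficient, hsucc a, hsucc c,
    ascPochhammer_succ_eval n (a + 1), ascPochhammer_succ_eval n b, Nat.factorial_succ]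
  push_cast
  field_simp
  ring

end Coefficient

section Contiguous

variable {𝕂 : Type*} [RCLike 𝕂]

theorem one_le_radius_ordinaryHypergeometricSeries (𝔸 : Type*) [NormedDivisionRing 𝔸]
    [NormedAlgebra 𝕂 𝔸] (a b c : 𝕂) : 1 ≤ (ordinaryHypergeometricSeries 𝔸 a b c).radius := by
  by_cases! habc : ∀ k : ℕ, (k : 𝕂) ≠ -a ∧ (k : 𝕂) ≠ -b ∧ (k : 𝕂) ≠ -c
  · exact (ordinaryHypergeometricSeries_radius_eq_one 𝔸 a b c habc).ge
  obtain ⟨k, hk⟩ := habc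
  have hradius : (ordinaryHypergeometricSeries 𝔸 a b c).radius = ⊤ := by
    by_cases ha : (k : 𝕂) = -a
    · obtain rfl : a = -k := by rw [ha, neg_neg]
      exact ordinaryHypergeometric_radius_top_of_neg_nat₁ 𝔸 b c
    by_cases hb : (k : 𝕂) = -b
    · obtain rfl : b = -k := by rw [hb, neg_neg]
      exact ordinaryHypergeometric_radius_top_of_neg_nat₂ 𝔸 a c
    · obtain rfl : c = -k := by rw [hk ha hb, neg_neg]
      exact ordinaryHypergeometric_radius_top_of_neg_nat₃ 𝔸 a b
  exact hradius ▸ le_top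

theorem hasFPowerSeriesOnBall_ordinaryHypergeometric (a b c : 𝕂) :
    HasFPowerSeriesOnBall (₂F₁ a b c : 𝕂 → 𝕂) (ordinaryHypergeometricSeries 𝕂 a b c) 0 1 :=
  have hradius := one_le_radius_ordinaryHypergeometricSeries 𝕂 a b c
  (FormalMultilinearSeries.hasFPowerSeriesOnBall _ (one_pos.trans_le hradius)).mono one_pos hradius

variable {z : 𝕂} (hz : ‖z‖ < 1)
include hz

theorem differentiableAt_ordinaryHypergeometric (a b c : 𝕂) :
    DifferentiableAt 𝕂 (₂F₁ a b c : 𝕂 → 𝕂) z :=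
  ((hasFPowerSeriesOnBall_ordinaryHypergeometric a b c).analyticAt_of_mem
    (mem_eball_zero_one_of_norm_lt_one hz)).differentiableAt

theorem hasSum_ordinaryHypergeometric (a b c : 𝕂) :
    HasSum (fun n ↦ ordinaryHypergeometricCoefficient a b c n * z ^ n) (₂F₁ a b c z) := by
  have hsum := (hasFPowerSeriesOnBall_ordinaryHypergeometric a b c).hasSum
    (mem_eball_zero_one_of_norm_lt_one hz)
  simpa only [zero_add, ordinaryHypergeometricSeries_apply_eq, smul_eq_mul] using hsum

theorem hasSum_mul_deriv_ordinaryHypergeometric (a b c : 𝕂) :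
    HasSum (fun n ↦ n * ordinaryHypergeometricCoefficient a b c n * z ^ n)
      (z * deriv (₂F₁ a b c) z) := by
  have hsum := hasSum_nsmul_of_hasFPowerSeriesOnBall
    (hasFPowerSeriesOnBall_ordinaryHypergeometric a b c)
    (mem_eball_zero_one_of_norm_lt_one hz)
  simpa only [zero_add, ordinaryHypergeometricSeries_apply_eq, smul_eq_mul, nsmul_eq_mul,
    mul_assoc, fderiv_eq_smul_deriv] using hsum

theorem mul_deriv_ordinaryHypergeometric (a b c : 𝕂) :
    z * deriv (₂F₁ a b c) z = a * (₂F₁ (a + 1) b c z - ₂F₁ a b c z) := by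
  have hdiff := ((hasSum_ordinaryHypergeometric hz (a + 1) b c).sub
    (hasSum_ordinaryHypergeometric hz a b c)).mul_left a
  refine (hasSum_mul_deriv_ordinaryHypergeometric hz a b c).unique (hdiff.congr_fun fun n ↦ ?_)
  linear_combination -z ^ n * mul_ordinaryHypergeometricCoefficient_add_one_left a b n c

theorem mul_deriv_ordinaryHypergeometric_add_one_right (a b : 𝕂) {c : 𝕂}
    (hc : ∀ m : ℕ, c ≠ -m) :
    z * deriv (₂F₁ a b (c + 1)) z = c * (₂F₁ a b c z - ₂F₁ a b (c + 1) z) := by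
  have hdiff := ((hasSum_ordinaryHypergeometric hz a b c).sub
    (hasSum_ordinaryHypergeometric hz a b (c + 1))).mul_left c
  refine (hasSum_mul_deriv_ordinaryHypergeometric hz a b (c + 1)).unique
    (hdiff.congr_fun fun n ↦ ?_)
  linear_combination -z ^ n * mul_ordinaryHypergeometricCoefficient_add_one_right a b n hc

theorem ordinaryHypergeometric_contiguous (a b : 𝕂) {c : 𝕂} (hc : ∀ m : ℕ, c ≠ -m) :
    c * (1 - z) * ₂F₁ (a + 1) b c z =
      c * ₂F₁ a b c z + (b - c) * z * ₂F₁ (a + 1) b (c + 1) z := by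
  have hF := hasSum_ordinaryHypergeometric hz a b c
  have hG := hasSum_ordinaryHypergeometric hz (a + 1) b (c + 1)
  have hH := hasSum_ordinaryHypergeometric hz (a + 1) b c
  have hleft := (hasSum_nat_add_iff' 1).2 ((hH.sub hF).mul_left c)
  have hright := ((hH.mul_left c).add (hG.mul_left (b - c))).mul_left z
  have hsum := hleft.unique (hright.congr_fun fun n ↦ ?_)
  · simp only [Finset.range_one, Finset.sum_singleton, ordinaryHypergeometricCoefficient,
      ascPochhammer_zero, Polynomial.eval_one, sub_self, mul_zero, sub_zero] at hsum
    linear_combination hsum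
  · linear_combination z ^ (n + 1) * mul_ordinaryHypergeometricCoefficient_succ_sub a b n hc -
      z ^ (n + 1) * mul_ordinaryHypergeometricCoefficient_add_one_right (a + 1) b n hc

theorem mul_one_sub_mul_deriv_ordinaryHypergeometric (a b : 𝕂) {c : 𝕂}
    (hc : ∀ m : ℕ, c ≠ -m) :
    c * (z * (1 - z) * deriv (₂F₁ a b c) z) =
      a * z * (c * ₂F₁ a b c z + (b - c) * ₂F₁ (a + 1) b (c + 1) z) := by
  linear_combination c * (1 - z) * mul_deriv_ordinaryHypergeometric hz a b c +
    a * ordinaryHypergeometric_contiguous hz a b hc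

theorem mul_one_sub_mul_deriv_ordinaryHypergeometric_add_one (a b : 𝕂) {c : 𝕂}
    (hc : ∀ m : ℕ, c ≠ -m) :
    z * (1 - z) * deriv (₂F₁ (a + 1) b (c + 1)) z =
      c * ₂F₁ a b c z + (b * z - c) * ₂F₁ (a + 1) b (c + 1) z := by
  linear_combination (1 - z) * mul_deriv_ordinaryHypergeometric_add_one_right hz (a + 1) b hc +
    ordinaryHypergeometric_contiguous hz a b hc

end Contiguous

section FuchsianSystem

/-- The product of `F` with the local factor `z ^ α * (1 - z) ^ β` (principal branches), which
shifts the exponents of `F` at `0` and `1` by `α` and `β`. -/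
noncomputable def cpowTwist (α β : ℂ) (F : ℂ → ℂ) (z : ℂ) : ℂ :=
  z ^ α * (1 - z) ^ β * F z

open Complex

theorem one_sub_mem_slitPlane {z : ℂ} (hz : ‖z‖ < 1) : 1 - z ∈ slitPlane := by
  simpa only [sub_eq_add_neg] using mem_slitPlane_of_norm_lt_one ((norm_neg z).trans_lt hz)

theorem hasDerivAt_cpow_const {z : ℂ} (hz : z ∈ slitPlane) (α : ℂ) :
    HasDerivAt (· ^ α) (z ^ α * (α / z)) z := by
  convert (hasDerivAt_id' z).cpow_const (c := α) hz using 1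
  rw [cpow_sub _ _ (slitPlane_ne_zero hz), cpow_one]
  ring

theorem hasDerivAt_cpowTwist {F : ℂ → ℂ} {F' z : ℂ} (α β : ℂ) (hz : z ∈ slitPlane)
    (hz' : 1 - z ∈ slitPlane) (hF : HasDerivAt F F' z) :
    HasDerivAt (cpowTwist α β F)
      (cpowTwist α β F z * (α / z + β / (z - 1)) + z ^ α * (1 - z) ^ β * F') z := by
  have hpow_one_sub := (hasDerivAt_cpow_const hz' β).comp_const_sub 1 z
  refine (((hasDerivAt_cpow_const hz α).mul hpow_one_sub).mul hF).congr_deriv ?_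
  rw [← neg_sub 1 z, div_neg, cpowTwist]
  simp only [Pi.mul_apply]
  ring

variable {z : ℂ} (hz : z ∈ slitPlane) (hz1 : ‖z‖ < 1) (α β a b : ℂ) {c : ℂ}
  (hc : ∀ m : ℕ, c ≠ -m)
include hz hz1 hc

theorem hasDerivAt_cpowTwist_ordinaryHypergeometric :
    HasDerivAt (cpowTwist α β (₂F₁ a b c))
      (cpowTwist α β (₂F₁ a b c) z * (α / z + (β - a) / (z - 1)) +
        -(a / c) * cpowTwist α β (₂F₁ (a + 1) b (c + 1)) z * ((b - c) / (z - 1))) z := by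
  have hz_one_sub := one_sub_mem_slitPlane hz1
  have hderiv := (differentiableAt_ordinaryHypergeometric hz1 a b c).hasDerivAt
  refine (hasDerivAt_cpowTwist α β hz hz_one_sub hderiv).congr_deriv ?_
  have hc0 : c ≠ 0 := by simpa using hc 0
  have hz0 := slitPlane_ne_zero hz
  have hz_sub : z - 1 ≠ 0 := sub_ne_zero.2 (by rintro rfl; simp at hz1)
  have hF' : deriv (₂F₁ a b c) z = -a / (z - 1) * ₂F₁ a b c z -
      a / c * ((b - c) / (z - 1)) * ₂F₁ (a + 1) b (c + 1) z := by
    field_simp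
    refine mul_left_cancel₀ hz0 ?_
    linear_combination -mul_one_sub_mul_deriv_ordinaryHypergeometric hz1 a b hc
  rw [hF', cpowTwist, cpowTwist]
  ring

theorem hasDerivAt_cpowTwist_ordinaryHypergeometric_add_one :
    HasDerivAt (fun w ↦ -(a / c) * cpowTwist α β (₂F₁ (a + 1) b (c + 1)) w)
      (cpowTwist α β (₂F₁ a b c) z * (a / (z - 1) - a / z) +
        -(a / c) * cpowTwist α β (₂F₁ (a + 1) b (c + 1)) z *
          ((α - c) / z + (β - b + c) / (z - 1))) z := by
  have hz_one_sub := one_sub_mem_slitPlane hz1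
  have hderiv := (differentiableAt_ordinaryHypergeometric hz1 (a + 1) b (c + 1)).hasDerivAt
  refine ((hasDerivAt_cpowTwist α β hz hz_one_sub hderiv).const_mul (-(a / c))).congr_deriv ?_
  have hc0 : c ≠ 0 := by simpa using hc 0
  have hz0 := slitPlane_ne_zero hz
  have hz_sub : z - 1 ≠ 0 := sub_ne_zero.2 (by rintro rfl; simp at hz1)
  have hG' : deriv (₂F₁ (a + 1) b (c + 1)) z = c * (1 / z - 1 / (z - 1)) * ₂F₁ a b c z -
      (c / z + (b - c) / (z - 1)) * ₂F₁ (a + 1) b (c + 1) z := by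
    field_simp
    linear_combination -mul_one_sub_mul_deriv_ordinaryHypergeometric_add_one hz1 a b hc
  rw [hG', cpowTwist, cpowTwist]
  field_simp
  ring

end FuchsianSystem

theorem hyp2F1_eq_ordinaryHypergeometric (a b c : ℂ) : hyp2F1 a b c = ₂F₁ a b c := by
  funext z
  rw [hyp2F1, ordinaryHypergeometric_eq_tsum]
  refine tsum_congr fun n ↦ ?_
  rw [smul_eq_mul, div_eq_mul_inv, mul_inv]
  ring

/-- The explicit hypergeometric solution of the Knizhnik–Zamolodchikov system for the
four-point `sl(2)-hat` conformal block with one spin-1/2 degenerate insertion (channel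
`λ' = λ + 1`):  with `ρ = (λ-μ+ν+1)/2`,
`a = ((λ-μ+ν+1)/(2κ), (λ+μ+ν+3)/(2κ), (1+λ)/κ)`, the pair
`f₀(z) = z^{λ/(2κ)}(1-z)^{ν/(2κ)} ₂F₁(a₁,a₂;a₃|z)` and
`f₁(z) = -(a₁/a₃) z^{λ/(2κ)}(1-z)^{ν/(2κ)} ₂F₁(a₁+1,a₂;a₃+1|z)` satisfies
`κ f₀' = f₀(λ/(2z) + (ν-2ρ)/(2(z-1))) + f₁(ν-ρ+1)/(z-1)` and
`κ f₁' = f₀(ρ/(z-1) - ρ/z) + f₁((-λ-2)/(2z) - (ν-2(ρ-1))/(2(z-1)))` on `0 < |z| < 1`. -/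
theorem kz_hypergeometric_solution (lam mu nu κ : ℂ) (hκ : κ ≠ 0)
    (hpole : ∀ m : ℕ, (1 + lam) / κ ≠ -(m : ℂ))
    (ρ a₁ a₂ a₃ : ℂ)
    (hρ : ρ = (lam - mu + nu + 1) / 2)
    (ha₁ : a₁ = (lam - mu + nu + 1) / (2 * κ))
    (ha₂ : a₂ = (lam + mu + nu + 3) / (2 * κ))
    (ha₃ : a₃ = (1 + lam) / κ)
    (f₀ f₁ : ℂ → ℂ)
    (hf₀ : f₀ = fun w => w ^ (lam / (2 * κ)) * (1 - w) ^ (nu / (2 * κ)) *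
      hyp2F1 a₁ a₂ a₃ w)
    (hf₁ : f₁ = fun w => -(a₁ / a₃) * (w ^ (lam / (2 * κ)) * (1 - w) ^ (nu / (2 * κ)) *
      hyp2F1 (a₁ + 1) a₂ (a₃ + 1) w))
    (z : ℂ) (hz0 : z ≠ 0) (hz1 : ‖z‖ < 1) (hcut : ¬(z.im = 0 ∧ z.re ≤ 0)) :
    κ * deriv f₀ z =
        f₀ z * (lam / (2 * z) + (nu - 2 * ρ) / (2 * (z - 1))) +
          f₁ z * ((nu - ρ + 1) / (z - 1)) ∧
    κ * deriv f₁ z =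
        f₀ z * (ρ / (z - 1) - ρ / z) +
          f₁ z * ((-lam - 2) / (2 * z) - (nu - 2 * (ρ - 1)) / (2 * (z - 1))) := by
  have hz : z ∈ Complex.slitPlane := Complex.mem_slitPlane_iff.2 <| by
    rwa [or_comm, ← not_le, ← not_and_or]
  have hpole' : ∀ m : ℕ, a₃ ≠ -m := ha₃ ▸ hpole
  have hd₀ := hasDerivAt_cpowTwist_ordinaryHypergeometric hz hz1 (lam / (2 * κ)) (nu / (2 * κ))
    a₁ a₂ hpole'
  have hd₁ := hasDerivAt_cpowTwist_ordinaryHypergeometric_add_one hz hz1 (lam / (2 * κ))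
    (nu / (2 * κ)) a₁ a₂ hpole'
  obtain rfl : f₀ = cpowTwist (lam / (2 * κ)) (nu / (2 * κ)) (₂F₁ a₁ a₂ a₃) := by
    rw [hf₀, hyp2F1_eq_ordinaryHypergeometric]; rfl
  obtain rfl : f₁ = fun w ↦ -(a₁ / a₃) *
      cpowTwist (lam / (2 * κ)) (nu / (2 * κ)) (₂F₁ (a₁ + 1) a₂ (a₃ + 1)) w := by
    rw [hf₁, hyp2F1_eq_ordinaryHypergeometric]; rfl
  have hlam : κ * (lam / (2 * κ)) = lam / 2 := by field_simp
  have hnu : κ * (nu / (2 * κ)) = nu / 2 := by field_simp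
  have ha₁' : κ * a₁ = ρ := by rw [ha₁, hρ]; field_simp
  have ha₃' : κ * a₃ = 1 + lam := by rw [ha₃]; field_simp
  have ha₂' : κ * a₂ = nu - ρ + 2 + lam := by rw [ha₂, hρ]; field_simp; ring
  rw [hd₀.deriv, hd₁.deriv]
  simp only [div_mul_eq_div_div]
  constructor
  · linear_combination cpowTwist _ _ (₂F₁ a₁ a₂ a₃) z * (hlam / z + (hnu - ha₁') / (z - 1)) -
      a₁ / a₃ * cpowTwist _ _ (₂F₁ (a₁ + 1) a₂ (a₃ + 1)) z * (ha₂' - ha₃') / (z - 1)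
  · linear_combination cpowTwist _ _ (₂F₁ a₁ a₂ a₃) z * (ha₁' / (z - 1) - ha₁' / z) -
      a₁ / a₃ * cpowTwist _ _ (₂F₁ (a₁ + 1) a₂ (a₃ + 1)) z *
        ((hlam - ha₃') / z + (hnu - ha₂' + ha₃') / (z - 1))
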